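/- Let X ⊆ ℝⁿ, let U and W be subsets of normed vector spaces, let f : X × U × W → X be a (deterministic, non-blocking) transition map, and let h_2 : X → ℝ^{q} be an internal output map. Suppose Σ is incrementally passivable, i.e., there exist H : X → U, a continuous G : X × X → [0,∞), functions α̲, κ̂ ∈ K∞ and a symmetric matrix X̄ ∈ ℝ^{(p+q)×(p+q)} (where W ⊆ ℝ^p) such that for all x, x' ∈ X, u ∈ U, w, w' ∈ W: (15) α̲(‖x − x'‖) ≤ G(x,x'), and (16) G(f(x,H(x)+u,w), f(x',H(x')+u,w')) − G(x,x') ≤ −κ̂(G(x,x')) + [w − w'; h_2(x) − h_2(x')]ᵀ X̄ [w − w'; h_2(x) − h_2(x')]. Suppose further there is γ ∈ K∞ with G(x,x') − G(x,x'') ≤ γ(‖x' − x''‖) for all x, x', x'' ∈ X. Let η > 0, let X̂ ⊆ X, Û ⊆ U, Ŵ ⊆ W, and define the abstract transition map f̂(x̂,û,ŵ) := { x̂_d ∈ X̂ : ‖x̂_d − f(x̂, H(x̂)+û, ŵ)‖ ≤ η/2 }. Then G is a storage function from the abstraction Σ̂ to Σ; concretely: (a) α̲(‖x − x̂‖) ≤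 G(x,x̂) for all x ∈ X, x̂ ∈ X̂, and (b) for all x ∈ X, x̂ ∈ X̂, û ∈ Û, taking u := H(x) + û, for all w ∈ W, ŵ ∈ Ŵ and all x̂_d ∈ f̂(x̂,û,ŵ): G(f(x,u,w), x̂_d) − G(x,x̂) ≤ −κ̂(G(x,x̂)) + [w − ŵ; h_2(x) − h_2(x̂)]ᵀ X̄ [w − ŵ; h_2(x) − h_2(x̂)] + γ(η/2). -/

import Mathlib

open Filter Matrix

/-- A class-K function: continuous, strictly increasing on `[0,∞)`, and vanishing at `0`. -/
def ClassK (f : ℝ → ℝ) : Prop :=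
  ContinuousOn f (Set.Ici 0) ∧ StrictMonoOn f (Set.Ici 0) ∧ f 0 = 0

/-- A class-K∞ function: a class-K function that is unbounded. -/
def ClassKInf (f : ℝ → ℝ) : Prop :=
  ClassK f ∧ Tendsto f atTop atTop

/-! Quantizing the successor `F x̂ û ŵ` moves it by at most `δ`, and the triangle-type inequality
converts this into an error of at most `γ δ` in the storage function. Hence the incremental
dissipation inequality between the two exact successors survives up to the offset `γ δ`. -/

theorem ClassK.monotoneOn {α : ℝ → ℝ} (hα : ClassK α) : MonotoneOn α (Set.Ici 0) :=
  hα.2.1.monotoneOn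

section Storage

variable {E V D : Type*}

/-- Incremental passivity of the deterministic system `F` with states `X`, external inputs `U` and
internal inputs `W`, witnessed by the storage function `G`. Here `F` is the closed loop
`fun x u w => f x (H x + u) w` of the paper, whose quadratic form in the increments
`[w - w'; h₂ x - h₂ x']` becomes an arbitrary supply rate `s w w' x x'`; likewise `α` and `κ` are
arbitrary functions. -/
structure IsIncrementallyPassive [Dist E] (X : Set E) (U : Set V) (W : Set D)
    (F : E → V → D → E) (α κ : ℝ → ℝ) (s : D → D → E → E → ℝ) (G : E → E → ℝ) : Prop where
  lower_bound : ∀ x ∈ X, ∀ x' ∈ X, α (dist x x') ≤ G x x'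
  dissipation : ∀ x ∈ X, ∀ x' ∈ X, ∀ u ∈ U, ∀ w ∈ W, ∀ w' ∈ W,
    G (F x u w) (F x' u w') - G x x' ≤ -κ (G x x') + s w w' x x'

/-- `G` is a storage function, with offset `ε`, from the set-valued system `Fh` with states `Xh`,
external inputs `Uh` and internal inputs `Wh` to the deterministic system `F` with states `X` and
internal inputs `W`. The interface is built into `F`, so both systems receive the same external
input. -/
structure IsStorageFunction [Dist E] (X : Set E) (W : Set D) (F : E → V → D → E)
    (Xh : Set E) (Uh : Set V) (Wh : Set D) (Fh : E → V → D → Set E)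
    (α κ : ℝ → ℝ) (s : D → D → E → E → ℝ) (ε : ℝ) (G : E → E → ℝ) : Prop where
  lower_bound : ∀ x ∈ X, ∀ xh ∈ Xh, α (dist x xh) ≤ G x xh
  dissipation : ∀ x ∈ X, ∀ xh ∈ Xh, ∀ uh ∈ Uh, ∀ w ∈ W, ∀ wh ∈ Wh, ∀ xhd ∈ Fh xh uh wh,
    G (F x uh w) xhd - G x xh ≤ -κ (G x xh) + s w wh x xh + ε

/-- The transition map of the finite abstraction: the points of `Xh` within `δ` of the exact
successor under `F`. The paper takes `δ = η / 2`. -/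
def quantizedTransition [PseudoMetricSpace E] (F : E → V → D → E) (Xh : Set E) (δ : ℝ)
    (x : E) (u : V) (w : D) : Set E :=
  Xh ∩ Metric.closedBall (F x u w) δ

variable [PseudoMetricSpace E]

theorem sub_le_of_dist_le {X : Set E} {G : E → E → ℝ} {γ : ℝ → ℝ} {δ : ℝ}
    (hγ : MonotoneOn γ (Set.Ici 0))
    (hG : ∀ x ∈ X, ∀ x' ∈ X, ∀ x'' ∈ X, G x x' - G x x'' ≤ γ (dist x' x''))
    {x y z : E} (hx : x ∈ X) (hy : y ∈ X) (hz : z ∈ X) (hyz : dist y z ≤ δ) :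
    G x y - G x z ≤ γ δ :=
  (hG x hx y hy z hz).trans <| hγ dist_nonneg (dist_nonneg.trans hyz) hyz

theorem stmt_9_general {X Xh : Set E} {U Uh : Set V} {W Wh : Set D} {F : E → V → D → E}
    {α κ γ : ℝ → ℝ} {s : D → D → E → E → ℝ} {G : E → E → ℝ} {δ : ℝ}
    (hF : ∀ x ∈ X, ∀ u ∈ U, ∀ w ∈ W, F x u w ∈ X)
    (hpass : IsIncrementallyPassive X U W F α κ s G)
    (hγ : MonotoneOn γ (Set.Ici 0))
    (hG : ∀ x ∈ X, ∀ x' ∈ X, ∀ x'' ∈ X, G x x' - G x x'' ≤ γ (dist x' x''))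
    (hXh : Xh ⊆ X) (hUh : Uh ⊆ U) (hWh : Wh ⊆ W) :
    IsStorageFunction X W F Xh Uh Wh (quantizedTransition F Xh δ) α κ s (γ δ) G where
  lower_bound x hx xh hxh := hpass.lower_bound x hx xh (hXh hxh)
  dissipation x hx xh hxh uh huh w hw wh hwh xhd hxhd := by
    obtain ⟨hxhd_mem, hxhd_near⟩ := hxhd
    have hexact : G (F x uh w) (F xh uh wh) - G x xh ≤ -κ (G x xh) + s w wh x xh :=
      hpass.dissipation x hx xh (hXh hxh) uh (hUh huh) w hw wh (hWh hwh)
    have hquant : G (F x uh w) xhd - G (F x uh w) (F xh uh wh) ≤ γ δ :=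
      sub_le_of_dist_le hγ hG (hF x hx uh (hUh huh) w hw) (hXh hxhd_mem)
        (hF xh (hXh hxh) uh (hUh huh) wh (hWh hwh)) hxhd_near
    linarith

end Storage

/-- Theorem 3 of the paper: if `Σ` is incrementally passivable (witnessed by `H`, `G`,
`α̲`, `κ̂` and the symmetric supply matrix `X̄`), and `G` satisfies the triangle-type
inequality `G(x,x') − G(x,x'') ≤ γ(‖x' − x''‖)`, then `G` is a storage function from the
finite abstraction `Σ̂` (with state quantization `η` and transitions
`x̂_d ∈ f̂(x̂,û,ŵ) ↔ x̂_d ∈ X̂ ∧ ‖x̂_d − f(x̂,H(x̂)+û,ŵ)‖ ≤ η/2`) to `Σ`. -/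
theorem stmt_9
    (n pd qd : ℕ)
    {EU : Type*} [NormedAddCommGroup EU]
    (Xset : Set (Fin n → ℝ)) (Uset : Set EU) (Wset : Set (Fin pd → ℝ))
    (f : (Fin n → ℝ) → EU → (Fin pd → ℝ) → (Fin n → ℝ))
    (hf : ∀ x ∈ Xset, ∀ u : EU, ∀ w ∈ Wset, f x u w ∈ Xset)
    (h2 : (Fin n → ℝ) → Fin qd → ℝ)
    -- incremental passivability data
    (H : (Fin n → ℝ) → EU)
    (G : (Fin n → ℝ) → (Fin n → ℝ) → ℝ)
    (hGcont : Continuous fun pr : (Fin n → ℝ) × (Fin n → ℝ) => G pr.1 pr.2)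
    (hGnonneg : ∀ x x', 0 ≤ G x x')
    (αlow κh : ℝ → ℝ) (hαlow : ClassKInf αlow) (hκh : ClassKInf κh)
    (Xbar : Matrix (Fin pd ⊕ Fin qd) (Fin pd ⊕ Fin qd) ℝ) (hXbar : Xbarᵀ = Xbar)
    -- (15): lower bound
    (h15 : ∀ x ∈ Xset, ∀ x' ∈ Xset, αlow ‖x - x'‖ ≤ G x x')
    -- (16): dissipation inequality
    (h16 : ∀ x ∈ Xset, ∀ x' ∈ Xset, ∀ u ∈ Uset, ∀ w ∈ Wset, ∀ w' ∈ Wset,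
      G (f x (H x + u) w) (f x' (H x' + u) w') - G x x' ≤
        -κh (G x x') +
        (Sum.elim (w - w') (h2 x - h2 x')) ⬝ᵥ (Xbar *ᵥ Sum.elim (w - w') (h2 x - h2 x')))
    -- triangle-type inequality (17)
    (γ : ℝ → ℝ) (hγ : ClassKInf γ)
    (hTI : ∀ x ∈ Xset, ∀ x' ∈ Xset, ∀ x'' ∈ Xset, G x x' - G x x'' ≤ γ ‖x' - x''‖)
    -- data of the abstraction
    (η : ℝ) (hη : 0 < η)
    (Xh : Set (Fin n → ℝ)) (hXh : Xh ⊆ Xset)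
    (Uh : Set EU) (hUh : Uh ⊆ Uset)
    (Wh : Set (Fin pd → ℝ)) (hWh : Wh ⊆ Wset)
    (fh : (Fin n → ℝ) → EU → (Fin pd → ℝ) → Set (Fin n → ℝ))
    (hfh : ∀ xh uh wh, fh xh uh wh =
      {xhd ∈ Xh | ‖xhd - f xh (H xh + uh) wh‖ ≤ η / 2}) :
    -- `G` is a storage function from `Σ̂` to `Σ`:
    -- (a) lower bound
    (∀ x ∈ Xset, ∀ xh ∈ Xh, αlow ‖x - xh‖ ≤ G x xh) ∧
    -- (b) dissipation inequality with `u = H(x) + û`, `σ = κ̂`, `ρ_ext ≡ 0`,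
    --     `W, Ŵ, H` identity matrices, and `ε = γ(η/2)`
    (∀ x ∈ Xset, ∀ xh ∈ Xh, ∀ uh ∈ Uh, ∀ w ∈ Wset, ∀ wh ∈ Wh,
      ∀ xhd ∈ fh xh uh wh,
        G (f x (H x + uh) w) xhd - G x xh ≤
          -κh (G x xh) +
          (Sum.elim (w - wh) (h2 x - h2 xh)) ⬝ᵥ
            (Xbar *ᵥ Sum.elim (w - wh) (h2 x - h2 xh)) +
          γ (η / 2)) := by
  obtain rfl : fh = quantizedTransition (fun x u w => f x (H x + u) w) Xh (η / 2) := by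
    ext
    simp only [hfh, quantizedTransition, Set.mem_inter_iff, Set.mem_ofPred_eq,
      Metric.mem_closedBall, dist_eq_norm]
  simp only [← dist_eq_norm] at h15 hTI ⊢
  have hstorage := stmt_9_general (δ := η / 2)
    (fun x hx u _ w hw => hf x hx (H x + u) w hw) ⟨h15, h16⟩ hγ.1.monotoneOn hTI hXh hUh hWh
  exact ⟨hstorage.lower_bound, hstorage.dissipation⟩
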